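/- For every Schwartz symbol a : ℝ²ⁿ → ℂ and all Schwartz functions ψ, φ : ℝⁿ → ℂ, ∫_{ℝⁿ} (A_BJψ)(x)·conj(φ(x)) dx = ∫_{ℝ²ⁿ} a(z)·Wig_BJ(ψ,φ)(z) dz. -/

import Mathlib

open MeasureTheory Real Complex

noncomputable section

/-- Euclidean dot product on `ℝⁿ`. -/
def dotR {n : ℕ} (p y : Fin n → ℝ) : ℝ := ∑ i, p i * y i

/-- The `τ`-Wigner cross-distribution
`Wig_τ(ψ,φ)(x,p) = (2πhbar)^(−n) ∫ e^(−(i/hbar) p·y) ψ(x+τy) conj(φ(x−(1−τ)y)) dy`. -/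
def WigTau (hbar : ℝ) {n : ℕ} (τ : ℝ) (ψ φ : (Fin n → ℝ) → ℂ) (x p : Fin n → ℝ) : ℂ :=
  ((((2 * π * hbar) ^ n : ℝ))⁻¹ : ℂ) *
    ∫ y : Fin n → ℝ,
      Complex.exp (-(Complex.I / (hbar : ℂ)) * (dotR p y : ℝ)) *
        ψ (x + τ • y) * (starRingEnd ℂ) (φ (x - (1 - τ) • y))

/-- The Born–Jordan–Wigner cross-distribution: the average of the
`τ`-Wigner distributions over `τ ∈ [0,1]`. -/
def WigBJ (hbar : ℝ) {n : ℕ} (ψ φ : (Fin n → ℝ) → ℂ) (x p : Fin n → ℝ) : ℂ :=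
  ∫ τ in (0:ℝ)..1, WigTau hbar τ ψ φ x p

/-- The `hbar`-Fourier transform `Fψ(p) = (2πhbar)^(−n/2) ∫ e^(−(i/hbar) p·x) ψ(x) dx`. -/
def FourierHbar (hbar : ℝ) {n : ℕ} (ψ : (Fin n → ℝ) → ℂ) (p : Fin n → ℝ) : ℂ :=
  ((Real.sqrt ((2 * π * hbar) ^ n))⁻¹ : ℂ) *
    ∫ x : Fin n → ℝ, Complex.exp (-(Complex.I / (hbar : ℂ)) * (dotR p x : ℝ)) * ψ x

/-- The Shubin `τ`-operator
`A_τψ(x) = (2πhbar)^(−n) ∫∫ e^((i/hbar) p·(x−y)) a(τx+(1−τ)y, p) ψ(y) dp dy`,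
the inner integral being over `p`. -/
def ShubinOp (hbar : ℝ) {n : ℕ} (τ : ℝ) (a : ((Fin n → ℝ) × (Fin n → ℝ)) → ℂ)
    (ψ : (Fin n → ℝ) → ℂ) (x : Fin n → ℝ) : ℂ :=
  ((((2 * π * hbar) ^ n : ℝ))⁻¹ : ℂ) *
    ∫ y : Fin n → ℝ,
      (∫ p : Fin n → ℝ,
          Complex.exp ((Complex.I / (hbar : ℂ)) * (dotR p (x - y) : ℝ)) *
            a (τ • x + (1 - τ) • y, p)) * ψ y

/-- The Born–Jordan operator: the average of the Shubin `τ`-operators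
over `τ ∈ [0,1]`. -/
def BJOp (hbar : ℝ) {n : ℕ} (a : ((Fin n → ℝ) × (Fin n → ℝ)) → ℂ)
    (ψ : (Fin n → ℝ) → ℂ) (x : Fin n → ℝ) : ℂ :=
  ∫ τ in (0:ℝ)..1, ShubinOp hbar τ a ψ x

/-- `Θ(x,p) = sin(p·x/2hbar)/(p·x/2hbar)` (with value `1` when `p·x = 0`). -/
def Theta (hbar : ℝ) {n : ℕ} (x p : Fin n → ℝ) : ℝ :=
  if dotR p x = 0 then 1
  else Real.sin (dotR p x / (2 * hbar)) / (dotR p x / (2 * hbar))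

/-- The modified Heisenberg–Weyl operator
`T̂_τ(z₀)ψ(x) = e^((i/hbar)(p₀·x − (1−τ)p₀·x₀)) ψ(x−x₀)`. -/
def THW (hbar : ℝ) {n : ℕ} (τ : ℝ) (z₀ : (Fin n → ℝ) × (Fin n → ℝ))
    (ψ : (Fin n → ℝ) → ℂ) (x : Fin n → ℝ) : ℂ :=
  Complex.exp ((Complex.I / (hbar : ℂ)) *
      ((dotR z₀.2 x - (1 - τ) * dotR z₀.2 z₀.1 : ℝ) : ℂ)) * ψ (x - z₀.1)

/-- The symplectic Fourier transform
`F_σ a(z) = (2πhbar)^(−n) ∫ e^(−(i/hbar)σ(z,z′)) a(z′) dz′`,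
`σ((x,p),(x′,p′)) = p·x′ − p′·x`. -/
def symplFT (hbar : ℝ) {n : ℕ} (a : ((Fin n → ℝ) × (Fin n → ℝ)) → ℂ)
    (z : (Fin n → ℝ) × (Fin n → ℝ)) : ℂ :=
  ((((2 * π * hbar) ^ n : ℝ))⁻¹ : ℂ) *
    ∫ z' : (Fin n → ℝ) × (Fin n → ℝ),
      Complex.exp (-(Complex.I / (hbar : ℂ)) *
        ((dotR z.2 z'.1 - dotR z'.2 z.1 : ℝ) : ℂ)) * a z'

/-- The cross-ambiguity function
`Amb(ψ,φ)(x,p) = (2πhbar)^(−n) ∫ e^(−(i/hbar) p·x′) ψ(x′+x/2) conj(φ(x′−x/2)) dx′`. -/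
def Amb (hbar : ℝ) {n : ℕ} (ψ φ : (Fin n → ℝ) → ℂ) (x p : Fin n → ℝ) : ℂ :=
  ((((2 * π * hbar) ^ n : ℝ))⁻¹ : ℂ) *
    ∫ x' : Fin n → ℝ,
      Complex.exp (-(Complex.I / (hbar : ℂ)) * (dotR p x' : ℝ)) *
        ψ (x' + (1 / 2 : ℝ) • x) * (starRingEnd ℂ) (φ (x' - (1 / 2 : ℝ) • x))

/-!
If `x' = x - (1 - τ) y` and `y' = x + τ y`, then `x' - y' = -y` and `τ x' + (1 - τ) y' = x`.
Hence the volume-preserving map `(x, y) ↦ (x', y')` turns the integrand of `⟨A_τ ψ, φ⟩` into the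
product of `a (x, p)` and the integrand of `Wig_τ(ψ, φ)(x, p)`. If `‖a (x, p)‖ ≤ g p` with `g`
integrable, the former is dominated by `‖φ x‖ ‖ψ y‖ g p` uniformly in `τ`, so the integrals over
`τ`, `x`, `y` and `p` may be taken in any order.
-/

section MeasurePreserving

variable {α β γ E P : Type*} [MeasurableSpace α] [MeasurableSpace β] [MeasurableSpace γ]
  [MeasurableSpace E] [MeasurableSpace P]

lemma measurePreserving_prod_right_comm (μ : Measure α) (ν : Measure β) (ρ : Measure γ)
    [SFinite μ] [SFinite ν] [SFinite ρ] :
    MeasurePreserving (fun q : (α × β) × γ ↦ ((q.1.1, q.2), q.1.2))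
      ((μ.prod ν).prod ρ) ((μ.prod ρ).prod ν) :=
  ((measurePreserving_prodAssoc μ ρ ν).symm _).comp <|
    ((MeasurePreserving.id μ).prod Measure.measurePreserving_swap).comp <|
      measurePreserving_prodAssoc μ ν ρ

lemma measurePreserving_prod_add_comp [AddGroup E] [MeasurableAdd₂ E] (μ : Measure α)
    (ν : Measure E) [SFinite μ] [SFinite ν] [ν.IsAddRightInvariant] {f : α → E}
    (hf : Measurable f) :
    MeasurePreserving (fun q : α × E ↦ (q.1, q.2 + f q.1)) (μ.prod ν) (μ.prod ν) :=
  (MeasurePreserving.id μ).skew_product (g := fun s y ↦ y + f s)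
    (by unfold Function.uncurry; fun_prop)
    (.of_forall fun s ↦ (measurePreserving_add_right ν (f s)).map_eq)

variable [AddCommGroup E] [Module ℝ E] [MeasurableAdd₂ E] [MeasurableSub₂ E]
  [MeasurableSMul₂ ℝ E]

variable (E P) in
/-- The change of variables `x' = x - (1 - τ) y`, `y' = x + τ y` of the `τ`-Wigner distribution,
carried out for all `τ` at once and sending `(((τ, x), p), y)` to `(((τ, x'), y'), p)`.
Its inverse recovers the point `x = τ x' + (1 - τ) y'` at which the Shubin `τ`-operator evaluates
the symbol. The momentum `p` changes place so that the last integrals on both sides are those of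
`WigTau` and `ShubinOp`. -/
def tauShear : ((ℝ × E) × P) × E ≃ᵐ ((ℝ × E) × E) × P where
  toFun q := (((q.1.1.1, q.1.1.2 - (1 - q.1.1.1) • q.2), q.1.1.2 + q.1.1.1 • q.2), q.1.2)
  invFun q := (((q.1.1.1, q.1.1.1 • q.1.1.2 + (1 - q.1.1.1) • q.1.2), q.2), q.1.2 - q.1.1.2)
  left_inv := by
    rintro ⟨⟨⟨τ, x⟩, p⟩, y⟩
    simp only [Prod.mk.injEq, true_and, and_true]
    constructor <;> module
  right_inv := by
    rintro ⟨⟨⟨τ, x⟩, y⟩, p⟩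
    simp only [Prod.mk.injEq, true_and, and_true]
    constructor <;> module
  measurable_toFun := by dsimp only [Equiv.coe_fn_mk]; fun_prop
  measurable_invFun := by dsimp only [Equiv.coe_fn_symm_mk]; fun_prop

lemma measurePreserving_tauShear (ν : Measure ℝ) (μ : Measure E) (ρ : Measure P) [SFinite ν]
    [SFinite μ] [SFinite ρ] [μ.IsAddRightInvariant] :
    MeasurePreserving (tauShear E P) (((ν.prod μ).prod ρ).prod μ)
      (((ν.prod μ).prod μ).prod ρ) := by
  have shift_x : MeasurePreserving
      (fun q : (ℝ × E) × E ↦ ((q.1.1, q.1.2 + (q.1.1 - 1) • q.2), q.2))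
      ((ν.prod μ).prod μ) ((ν.prod μ).prod μ) :=
    (measurePreserving_prod_right_comm ν μ μ).comp <|
      (measurePreserving_prod_add_comp (ν.prod μ) μ (f := fun s ↦ (s.1 - 1) • s.2)
        (by fun_prop)).comp <| measurePreserving_prod_right_comm ν μ μ
  have shift_y : MeasurePreserving (fun q : (ℝ × E) × E ↦ (q.1, q.2 + q.1.2))
      ((ν.prod μ).prod μ) ((ν.prod μ).prod μ) :=
    measurePreserving_prod_add_comp (ν.prod μ) μ measurable_snd
  convert ((shift_y.comp shift_x).prod (MeasurePreserving.id ρ)).comp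
    (measurePreserving_prod_right_comm (ν.prod μ) ρ μ) using 1
  ext ⟨⟨⟨τ, x⟩, p⟩, y⟩ : 1
  simp only [tauShear, MeasurableEquiv.coe_mk, Equiv.coe_fn_mk, Function.comp_apply, Prod.map_apply,
    id_eq, Prod.mk.injEq, true_and, and_true]
  constructor <;> module

lemma quasiMeasurePreserving_tau_combination (ν : Measure ℝ) (μ : Measure E) (ρ : Measure P)
    [SFinite ν] [SFinite μ] [SFinite ρ] [μ.IsAddRightInvariant] :
    Measure.QuasiMeasurePreserving
      (fun q : ((ℝ × E) × E) × P ↦ (q.1.1.1 • q.1.1.2 + (1 - q.1.1.1) • q.1.2, q.2))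
      (((ν.prod μ).prod μ).prod ρ) (μ.prod ρ) :=
  Measure.quasiMeasurePreserving_snd.comp <|
    (measurePreserving_prodAssoc ν μ ρ).quasiMeasurePreserving.comp <|
      Measure.quasiMeasurePreserving_fst.comp
        ((measurePreserving_tauShear ν μ ρ).symm _).quasiMeasurePreserving

end MeasurePreserving

lemma exists_integrable_norm_le_snd {E F V : Type*} [NormedAddCommGroup E] [NormedSpace ℝ E]
    [NormedAddCommGroup F] [NormedSpace ℝ F] [MeasurableSpace F] [NormedAddCommGroup V]
    [NormedSpace ℝ V] (μ : Measure F) [μ.HasTemperateGrowth] (a : SchwartzMap (E × F) V) :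
    ∃ g : F → ℝ, Integrable g μ ∧ ∀ z, ‖a z‖ ≤ g z.2 := by
  set l := μ.integrablePower
  refine ⟨fun p ↦ 2 ^ l * (SchwartzMap.seminorm ℝ 0 0 a + SchwartzMap.seminorm ℝ l 0 a) *
    (1 + ‖p‖) ^ (-(l : ℝ)), (Measure.integrable_pow_neg_integrablePower μ).const_mul _, fun z ↦ ?_⟩
  have decay : ‖z.2‖ ^ (0 + l) * ‖a z‖ ≤ SchwartzMap.seminorm ℝ l 0 a := by
    rw [zero_add]
    refine le_trans ?_ (SchwartzMap.norm_pow_mul_le_seminorm ℝ a l z)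
    gcongr
    exact norm_snd_le z
  simpa only [pow_zero, one_mul] using pow_mul_le_of_le_of_pow_mul_le (norm_nonneg z.2)
    (norm_nonneg (a z)) (SchwartzMap.norm_le_seminorm ℝ a z) decay

section Pairing

variable {n : ℕ} {hbar : ℝ} {a : (Fin n → ℝ) × (Fin n → ℝ) → ℂ} {ψ φ : (Fin n → ℝ) → ℂ}
  {g : (Fin n → ℝ) → ℝ} {ν : Measure ℝ}

lemma dotR_neg_right (p y : Fin n → ℝ) : dotR p (-y) = -dotR p y := by
  simp only [dotR, Pi.neg_apply, mul_neg, Finset.sum_neg_distrib]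

lemma continuous_dotR : Continuous fun z : (Fin n → ℝ) × (Fin n → ℝ) ↦ dotR z.1 z.2 := by
  unfold dotR
  fun_prop

lemma norm_exp_I_div_mul_ofReal (hbar t : ℝ) : ‖Complex.exp (I / (hbar : ℂ) * (t : ℂ))‖ = 1 := by
  rw [show I / (hbar : ℂ) * (t : ℂ) = ((t / hbar : ℝ) : ℂ) * I by push_cast; ring,
    Complex.norm_exp_ofReal_mul_I]

/-- The integrand of `⟨A_τ ψ, φ⟩`, without the factor `(2πħ)⁻ⁿ`, as a function of
`(((τ, x), y), p)`; the order of the variables is that of the integrals in `ShubinOp`. -/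
def shubinIntegrand (hbar : ℝ) (a : (Fin n → ℝ) × (Fin n → ℝ) → ℂ) (ψ φ : (Fin n → ℝ) → ℂ) :
    ((ℝ × (Fin n → ℝ)) × (Fin n → ℝ)) × (Fin n → ℝ) → ℂ :=
  fun (((τ, x), y), p) ↦
    Complex.exp (I / (hbar : ℂ) * (dotR p (x - y) : ℝ)) * a (τ • x + (1 - τ) • y, p) * ψ y *
      (starRingEnd ℂ) (φ x)

lemma aestronglyMeasurable_shubinIntegrand [SFinite ν] (hbar : ℝ)
    (ha : AEStronglyMeasurable a) (hψ : AEStronglyMeasurable ψ) (hφ : AEStronglyMeasurable φ) :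
    AEStronglyMeasurable (shubinIntegrand hbar a ψ φ)
      (((ν.prod volume).prod volume).prod volume) := by
  have phase : Continuous fun q : ((ℝ × (Fin n → ℝ)) × (Fin n → ℝ)) × (Fin n → ℝ) ↦
      Complex.exp (I / (hbar : ℂ) * (dotR q.2 (q.1.1.2 - q.1.2) : ℝ)) := by
    have := continuous_dotR.comp (by fun_prop : Continuous
      fun q : ((ℝ × (Fin n → ℝ)) × (Fin n → ℝ)) × (Fin n → ℝ) ↦ (q.2, q.1.1.2 - q.1.2))
    fun_prop
  exact ((phase.aestronglyMeasurable.mul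
    (ha.comp_quasiMeasurePreserving (quasiMeasurePreserving_tau_combination ν volume volume))).mul
      hψ.comp_snd.comp_fst).mul
        (Complex.continuous_conj.comp_aestronglyMeasurable hφ.comp_snd.comp_fst.comp_fst)

lemma integrable_shubinIntegrand [IsFiniteMeasure ν] (hbar : ℝ) (ha : AEStronglyMeasurable a)
    (hg : Integrable g) (hag : ∀ᵐ z, ‖a z‖ ≤ g z.2) (hψ : Integrable ψ) (hφ : Integrable φ) :
    Integrable (shubinIntegrand hbar a ψ φ) (((ν.prod volume).prod volume).prod volume) := by
  have dominating : Integrable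
      (fun q : ((ℝ × (Fin n → ℝ)) × (Fin n → ℝ)) × (Fin n → ℝ) ↦
        ‖φ q.1.1.2‖ * ‖ψ q.1.2‖ * g q.2) (((ν.prod volume).prod volume).prod volume) :=
    ((hφ.norm.comp_snd ν).mul_prod hψ.norm).mul_prod hg
  refine dominating.mono' (aestronglyMeasurable_shubinIntegrand hbar ha hψ.1 hφ.1) ?_
  filter_upwards [(quasiMeasurePreserving_tau_combination ν volume volume).ae hag]
    with ⟨⟨⟨τ, x⟩, y⟩, p⟩ symbol_le
  calc ‖shubinIntegrand hbar a ψ φ (((τ, x), y), p)‖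
      = ‖φ x‖ * ‖ψ y‖ * ‖a (τ • x + (1 - τ) • y, p)‖ := by
        simp only [shubinIntegrand, norm_mul, norm_exp_I_div_mul_ofReal, RCLike.norm_conj]
        ring
    _ ≤ ‖φ x‖ * ‖ψ y‖ * g p := by gcongr

lemma shubinIntegrand_tauShear (τ : ℝ) (x p y : Fin n → ℝ) :
    shubinIntegrand hbar a ψ φ (tauShear _ _ (((τ, x), p), y)) =
      a (x, p) * (Complex.exp (-(I / (hbar : ℂ)) * (dotR p y : ℝ)) * ψ (x + τ • y) *
        (starRingEnd ℂ) (φ (x - (1 - τ) • y))) := by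
  have difference : x - (1 - τ) • y - (x + τ • y) = -y := by module
  have combination : τ • (x - (1 - τ) • y) + (1 - τ) • (x + τ • y) = x := by module
  simp only [shubinIntegrand, tauShear, MeasurableEquiv.coe_mk, Equiv.coe_fn_mk, difference,
    combination, dotR_neg_right, ofReal_neg, mul_neg, neg_mul]
  ring

lemma integral_average_shubinOp_mul_conj_eq_integral_shubinIntegrand [SFinite ν]
    (hF : Integrable (shubinIntegrand hbar a ψ φ) (((ν.prod volume).prod volume).prod volume)) :
    ∫ x, (∫ τ, ShubinOp hbar τ a ψ x ∂ν) * (starRingEnd ℂ) (φ x) =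
      ((((2 * π * hbar) ^ n : ℝ))⁻¹ : ℂ) *
        ∫ q, shubinIntegrand hbar a ψ φ q ∂(((ν.prod volume).prod volume).prod volume) := by
  rw [integral_prod _ hF, integral_prod _ hF.integral_prod_left,
    integral_prod_symm _ hF.integral_prod_left.integral_prod_left, ← integral_const_mul]
  simp only [ShubinOp, shubinIntegrand, integral_mul_const, integral_const_mul, ← mul_assoc]

lemma integral_mul_average_wigTau_eq_integral_shubinIntegrand_tauShear [SFinite ν]
    (hG : Integrable (fun q ↦ shubinIntegrand hbar a ψ φ (tauShear _ _ q))
      (((ν.prod volume).prod volume).prod volume)) :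
    ∫ z, a z * ∫ τ, WigTau hbar τ ψ φ z.1 z.2 ∂ν =
      ((((2 * π * hbar) ^ n : ℝ))⁻¹ : ℂ) *
        ∫ q, shubinIntegrand hbar a ψ φ (tauShear _ _ q)
          ∂(((ν.prod volume).prod volume).prod volume) := by
  have assoc := (measurePreserving_prodAssoc ν (volume : Measure (Fin n → ℝ))
    (volume : Measure (Fin n → ℝ))).symm
  have hK : Integrable (fun w : ℝ × (Fin n → ℝ) × (Fin n → ℝ) ↦
      ∫ y, shubinIntegrand hbar a ψ φ (tauShear _ _ (((w.1, w.2.1), w.2.2), y)))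
      (ν.prod (volume.prod volume)) :=
    assoc.integrable_comp_of_integrable hG.integral_prod_left
  calc ∫ z, a z * ∫ τ, WigTau hbar τ ψ φ z.1 z.2 ∂ν
      = ∫ z : (Fin n → ℝ) × (Fin n → ℝ), ((((2 * π * hbar) ^ n : ℝ))⁻¹ : ℂ) *
          ∫ τ, (∫ y, shubinIntegrand hbar a ψ φ (tauShear _ _ (((τ, z.1), z.2), y))) ∂ν := by
        congr 1 with z
        simp only [WigTau, shubinIntegrand_tauShear, integral_const_mul]
        exact mul_left_comm _ _ _
    _ = ((((2 * π * hbar) ^ n : ℝ))⁻¹ : ℂ) * ∫ w : ℝ × (Fin n → ℝ) × (Fin n → ℝ),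
          (∫ y, shubinIntegrand hbar a ψ φ (tauShear _ _ (((w.1, w.2.1), w.2.2), y)))
            ∂(ν.prod (volume.prod volume)) := by
        rw [integral_const_mul, integral_prod_symm _ hK]
        rfl
    _ = ((((2 * π * hbar) ^ n : ℝ))⁻¹ : ℂ) *
          ∫ q, shubinIntegrand hbar a ψ φ (tauShear _ _ q)
            ∂(((ν.prod volume).prod volume).prod volume) := by
        rw [integral_prod _ hG, ← assoc.integral_comp']
        rfl

/-- A Dirac mass `ν` gives the relation between `A_τ` and `Wig_τ` for a single `τ`. -/
theorem integral_average_shubinOp_mul_conj [IsFiniteMeasure ν] (ha : AEStronglyMeasurable a)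
    (hg : Integrable g) (hag : ∀ᵐ z, ‖a z‖ ≤ g z.2) (hψ : Integrable ψ) (hφ : Integrable φ) :
    ∫ x, (∫ τ, ShubinOp hbar τ a ψ x ∂ν) * (starRingEnd ℂ) (φ x) =
      ∫ z, a z * ∫ τ, WigTau hbar τ ψ φ z.1 z.2 ∂ν := by
  have shear := measurePreserving_tauShear ν (volume : Measure (Fin n → ℝ))
    (volume : Measure (Fin n → ℝ))
  have hF := integrable_shubinIntegrand (ν := ν) hbar ha hg hag hψ hφ
  rw [integral_average_shubinOp_mul_conj_eq_integral_shubinIntegrand hF,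
    integral_mul_average_wigTau_eq_integral_shubinIntegrand_tauShear
      (shear.integrable_comp_of_integrable hF),
    shear.integral_comp']

end Pairing

theorem bjOp_wigBJ_general {hbar : ℝ} (_hbar_ne : hbar ≠ 0) {n : ℕ}
    {a : (Fin n → ℝ) × (Fin n → ℝ) → ℂ} {ψ φ : (Fin n → ℝ) → ℂ} {g : (Fin n → ℝ) → ℝ}
    (ha : AEStronglyMeasurable a) (hg : Integrable g) (hag : ∀ᵐ z, ‖a z‖ ≤ g z.2)
    (hψ : Integrable ψ) (hφ : Integrable φ) :
    ∫ x, BJOp hbar a ψ x * (starRingEnd ℂ) (φ x) = ∫ z, a z * WigBJ hbar ψ φ z.1 z.2 := by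
  simp only [BJOp, WigBJ, intervalIntegral.integral_of_le zero_le_one]
  exact integral_average_shubinOp_mul_conj ha hg hag hψ hφ

/-- The fundamental relation between the Born–Jordan operator and the
Born–Jordan–Wigner distribution: `⟨A_BJψ, conj φ⟩ = ⟨a, Wig_BJ(ψ,φ)⟩`. -/
theorem bjOp_wigBJ (hbar : ℝ) (hh : 0 < hbar) (n : ℕ) (hn : 1 ≤ n)
    (a : SchwartzMap ((Fin n → ℝ) × (Fin n → ℝ)) ℂ)
    (ψ φ : SchwartzMap (Fin n → ℝ) ℂ) :
    ∫ x : Fin n → ℝ, BJOp hbar (⇑a) (⇑ψ) x * (starRingEnd ℂ) (φ x) =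
      ∫ z : (Fin n → ℝ) × (Fin n → ℝ), a z * WigBJ hbar (⇑ψ) (⇑φ) z.1 z.2 := by
  obtain ⟨g, hg, hag⟩ := exists_integrable_norm_le_snd volume a
  exact bjOp_wigBJ_general hh.ne' a.continuous.aestronglyMeasurable hg (.of_forall hag)
    ψ.integrable φ.integrable

end
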